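/- Let (Ω, 𝓕, P) be a probability space and T > 0. For each integer n ≥ 1 let L_n : [0,T] × Ω → [0,∞) be jointly measurable with ∫_0^T L_n(t,ω) dt < ∞ for P-almost every ω, and assume there exist nonnegative random variables η_n with η_n → 0 almost surely such that ∫_0^T L_n(t,ω) dt ≤ η_n(ω) · ln n for all n ≥ 2 and P-almost every ω. Fix ε > 0 and for each integer N ≥ 2 define ρ_N(ω) := inf{ t ∈ [0,T] : sup_{n ≥ N} (ln n)^{−1} ∫_0^t L_n(s,ω) ds ≥ ε } (with inf ∅ := T). Then: (a) for P-almost every ω, the random variable ψ_N(ω) := sup_{n ≥ 1} n^{−ε} exp( ∫_0^{ρ_N(ω)} L_n(s,ω) ds ) is finite, so that exp( ∫_0^{ρ_N} L_n(s) ds ) ≤ ψ_N · n^{ε} for all n ≥ 1 almost surely; and (b) lim_{N→∞} P(ρ_N < T) = 0. -/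

import Mathlib

open MeasureTheory ProbabilityTheory Filter Set

/-!
Almost surely `∫_0^T L_n dt` is eventually at most `c ln n`, for every `c > 0`. Since
`t ↦ ∫_0^t L_n ds` is nondecreasing, the same bound holds at every earlier time. With `c = ε` this
makes `n^{-ε} exp(∫_0^τ L_n ds) ≤ 1` for large `n`, whatever the time `τ ≤ T`. With `0 < c < ε`
it keeps `(ln n)⁻¹ ∫_0^t L_n ds` below the level `ε` for all `n ≥ N` and `t ∈ [0, T]`, unless
`∫_0^T L_n dt > c ln n` for some `n ≥ N`; these exceptional events decrease in `N` to a null set.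
-/

open Asymptotics

open scoped Topology

theorem isLittleO_of_abs_le_mul {α : Type*} {l : Filter α} {f η g : α → ℝ}
    (hη : Tendsto η l (𝓝 0)) (hf : ∀ᶠ x in l, |f x| ≤ η x * g x) : f =o[l] g := by
  have hmul : (fun x => η x * g x) =o[l] g := by
    simpa only [one_mul] using ((isLittleO_one_iff ℝ).2 hη).mul_isBigO (isBigO_refl g l)
  exact (IsBigO.of_bound' (hf.mono fun x hx => hx.trans (le_abs_self _))).trans_isLittleO hmul

theorem eventually_le_mul_log_of_isLittleO {x : ℕ → ℝ}
    (hx : x =o[atTop] fun n : ℕ => Real.log n) {c : ℝ} (hc : 0 < c) :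
    ∀ᶠ n : ℕ in atTop, x n ≤ c * Real.log n := by
  filter_upwards [hx.def hc] with n hn
  rw [Real.norm_of_nonneg (Real.log_natCast_nonneg n)] at hn
  exact (Real.le_norm_self _).trans hn

theorem rpow_neg_mul_exp_le_one {r ε y : ℝ} (hr : 0 < r) (hy : y ≤ ε * Real.log r) :
    r ^ (-ε) * Real.exp y ≤ 1 := by
  rw [Real.rpow_def_of_pos hr, ← Real.exp_add, Real.exp_le_one_iff]
  linarith

theorem bddAbove_range_rpow_neg_mul_exp {x : ℕ → ℝ} {ε : ℝ}
    (hx : ∀ᶠ n : ℕ in atTop, x n ≤ ε * Real.log n) :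
    BddAbove (range fun n : ℕ => ⨆ _ : 1 ≤ n, (n : ℝ) ^ (-ε) * Real.exp (x n)) := by
  refine IsBoundedUnder.bddAbove_range ⟨1, eventually_map.2 ?_⟩
  filter_upwards [hx, eventually_ge_atTop 1] with n hn h1
  rw [ciSup_pos h1]
  exact rpow_neg_mul_exp_le_one (Nat.cast_pos.2 h1) hn

theorem exp_le_iSup_rpow_neg_mul_exp_mul_rpow {x : ℕ → ℝ} {ε : ℝ}
    (hx : BddAbove (range fun n : ℕ => ⨆ _ : 1 ≤ n, (n : ℝ) ^ (-ε) * Real.exp (x n)))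
    {n : ℕ} (hn : 1 ≤ n) :
    Real.exp (x n) ≤ (⨆ m : ℕ, ⨆ _ : 1 ≤ m, (m : ℝ) ^ (-ε) * Real.exp (x m)) * (n : ℝ) ^ ε := by
  have hn0 : (0 : ℝ) < n := Nat.cast_pos.2 hn
  have hle := le_ciSup hx n
  rwa [ciSup_pos hn, Real.rpow_neg hn0.le, inv_mul_le_iff₀' (Real.rpow_pos_of_pos hn0 ε)] at hle

theorem tendsto_measure_biUnion_ge_zero {Ω κ : Type*} [MeasurableSpace Ω] {μ : Measure Ω}
    [IsFiniteMeasure μ] [Preorder κ] [IsDirectedOrder κ] [Nonempty κ] [Countable κ]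
    {s : κ → Set Ω} (hs : ∀ n, NullMeasurableSet (s n) μ)
    (hev : ∀ᵐ ω ∂μ, ∀ᶠ n in atTop, ω ∉ s n) :
    Tendsto (fun N => μ (⋃ n ≥ N, s n)) atTop (𝓝 0) := by
  have hnull : μ (⋂ N, ⋃ n ≥ N, s n) = 0 := by
    rw [measure_eq_zero_iff_ae_notMem]
    filter_upwards [hev] with ω hω hmem
    obtain ⟨N, hN⟩ := eventually_atTop.1 hω
    obtain ⟨n, hn, hns⟩ := mem_iUnion₂.1 (mem_iInter.1 hmem N)
    exact hN n hn hns
  rw [← hnull]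
  refine tendsto_measure_iInter_atTop (fun N => .iUnion fun n => .iUnion fun _ => hs n)
    (fun N M hNM => ?_) ⟨Classical.arbitrary κ, measure_ne_top μ _⟩
  exact biUnion_subset_biUnion_left fun n hn => hNM.trans hn

theorem hittingBtwn_eq_sInf_union_singleton {ι β Ω : Type*} [ConditionallyCompleteLinearOrder ι]
    (u : ι → Ω → β) (s : Set β) (a T : ι) (ω : Ω) :
    hittingBtwn u s a T ω = sInf ({t ∈ Icc a T | u t ω ∈ s} ∪ {T}) := by
  rw [hittingBtwn]
  split_ifs with hhit
  · obtain ⟨t, ht, hts⟩ := hhit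
    have hbdd : BddBelow {t ∈ Icc a T | u t ω ∈ s} := bddBelow_Icc.mono (sep_subset _ _)
    rw [csInf_union hbdd ⟨t, ht, hts⟩ bddBelow_singleton (singleton_nonempty T), csInf_singleton]
    exact (min_eq_left ((csInf_le hbdd ⟨ht, hts⟩).trans ht.2)).symm
  · have hempty : {t ∈ Icc a T | u t ω ∈ s} = ∅ :=
      eq_empty_of_forall_notMem fun t ht => hhit ⟨t, ht⟩
    rw [hempty, empty_union, csInf_singleton]

theorem monotoneOn_setIntegral_Ioc {α : Type*} [Preorder α] [MeasurableSpace α]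
    {ν : Measure α} {f : α → ℝ} {a T : α} (hf0 : 0 ≤ᵐ[ν.restrict (Ioc a T)] f)
    (hf : IntegrableOn f (Ioc a T) ν) :
    MonotoneOn (fun t => ∫ s in Ioc a t, f s ∂ν) (Icc a T) := fun _ _ _ ht hst =>
  setIntegral_mono_set (hf.mono_set (Ioc_subset_Ioc_right ht.2))
    (ae_restrict_of_ae_restrict_of_subset (Ioc_subset_Ioc_right ht.2) hf0)
    (Ioc_subset_Ioc_right hst).eventuallyLE

section Localization

variable {Ω ι : Type*}

/-- The process `t ↦ sup_{n ≥ N} (ln n)⁻¹ A_n(t)` whose passage above `ε` defines the localizing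
times `ρ_N`. The supremum is taken in `ℝ`, so it is `0` where the family is unbounded, and each
excluded index `n < N` contributes the value `0`. -/
noncomputable def tailLogRate (A : ℕ → ι → Ω → ℝ) (N : ℕ) (t : ι) (ω : Ω) : ℝ :=
  ⨆ n : ℕ, ⨆ _ : N ≤ n, (Real.log n)⁻¹ * A n t ω

theorem tailLogRate_le {A : ℕ → ι → Ω → ℝ} {N : ℕ} (hN : 2 ≤ N) {c : ℝ} (hc : 0 ≤ c) {t : ι}
    {ω : Ω} (hA : ∀ n, N ≤ n → A n t ω ≤ c * Real.log n) : tailLogRate A N t ω ≤ c := by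
  refine Real.iSup_le (fun n => Real.iSup_le (fun hn => ?_) hc) hc
  have hlog : 0 < Real.log n := Real.log_pos (Nat.one_lt_cast.2 (hN.trans hn))
  rw [inv_mul_le_iff₀' hlog]
  exact hA n hn

variable [ConditionallyCompleteLinearOrder ι] {a T : ι} {A : ℕ → ι → Ω → ℝ}

theorem hittingBtwn_tailLogRate_eq_end {N : ℕ} (hN : 2 ≤ N) {c ε : ℝ} (hc : 0 ≤ c) (hcε : c < ε)
    {ω : Ω} (hmono : ∀ n, MonotoneOn (fun t => A n t ω) (Icc a T))
    (hA : ∀ n, N ≤ n → A n T ω ≤ c * Real.log n) :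
    hittingBtwn (tailLogRate A N) (Ici ε) a T ω = T := by
  refine hittingBtwn_eq_end_iff.2 fun ⟨t, ht, hhit⟩ => absurd hhit (notMem_Ici.2 ?_)
  have hT : T ∈ Icc a T := right_mem_Icc.2 (ht.1.trans ht.2)
  exact (tailLogRate_le hN hc fun n hn => (hmono n ht hT ht.2).trans (hA n hn)).trans_lt hcε

variable [MeasurableSpace Ω] {μ : Measure Ω}

theorem tendsto_measure_hittingBtwn_tailLogRate_lt [IsFiniteMeasure μ]
    (hmono : ∀ᵐ ω ∂μ, ∀ n, MonotoneOn (fun t => A n t ω) (Icc a T))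
    (hmeas : ∀ n, AEMeasurable (A n T) μ)
    (hlog : ∀ᵐ ω ∂μ, (fun n => A n T ω) =o[atTop] fun n : ℕ => Real.log n)
    {ε : ℝ} (hε : 0 < ε) :
    Tendsto (fun N => μ {ω | hittingBtwn (tailLogRate A N) (Ici ε) a T ω < T}) atTop (𝓝 0) := by
  let exceed (n : ℕ) : Set Ω := {ω | ε / 2 * Real.log n < A n T ω}
  have hexceed : Tendsto (fun N => μ (⋃ n ≥ N, exceed n)) atTop (𝓝 0) := by
    refine tendsto_measure_biUnion_ge_zero
      (fun n => nullMeasurableSet_lt aemeasurable_const (hmeas n)) ?_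
    filter_upwards [hlog] with ω hω
    exact (eventually_le_mul_log_of_isLittleO hω (half_pos hε)).mono fun n hn => not_lt.2 hn
  refine tendsto_of_tendsto_of_tendsto_of_le_of_le' tendsto_const_nhds hexceed
    (Eventually.of_forall fun _ => zero_le) ?_
  filter_upwards [eventually_ge_atTop 2] with N hN
  refine measure_mono_ae ?_
  filter_upwards [hmono] with ω hω hlt
  by_contra hnot
  refine hlt.ne (hittingBtwn_tailLogRate_eq_end hN (half_pos hε).le (half_lt_self hε) hω ?_)
  exact fun n hn => not_lt.1 fun h => hnot (mem_iUnion₂.2 ⟨n, hn, h⟩)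

/-- The nondecreasing processes `A_n` replace `t ↦ ∫_0^t L_n ds`. -/
theorem localization_L_little_o_general [IsFiniteMeasure μ]
    (hmono : ∀ᵐ ω ∂μ, ∀ n, MonotoneOn (fun t => A n t ω) (Icc a T))
    (hmeas : ∀ n, AEMeasurable (A n T) μ)
    (hlog : ∀ᵐ ω ∂μ, (fun n => A n T ω) =o[atTop] fun n : ℕ => Real.log n)
    {ε : ℝ} (hε : 0 < ε) :
    (∀ᵐ ω ∂μ, ∀ τ ∈ Icc a T,
      BddAbove (range fun n : ℕ => ⨆ _ : 1 ≤ n, (n : ℝ) ^ (-ε) * Real.exp (A n τ ω)) ∧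
      ∀ n : ℕ, 1 ≤ n → Real.exp (A n τ ω) ≤
        (⨆ m : ℕ, ⨆ _ : 1 ≤ m, (m : ℝ) ^ (-ε) * Real.exp (A m τ ω)) * (n : ℝ) ^ ε) ∧
    Tendsto (fun N => μ {ω | hittingBtwn (tailLogRate A N) (Ici ε) a T ω < T}) atTop (𝓝 0) := by
  refine ⟨?_, tendsto_measure_hittingBtwn_tailLogRate_lt hmono hmeas hlog hε⟩
  filter_upwards [hmono, hlog] with ω hω hωlog τ hτ
  have hT : T ∈ Icc a T := right_mem_Icc.2 (hτ.1.trans hτ.2)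
  have hbdd := bddAbove_range_rpow_neg_mul_exp <|
    (eventually_le_mul_log_of_isLittleO hωlog hε).mono fun n hn => (hω n hτ hT hτ.2).trans hn
  exact ⟨hbdd, fun n hn => exp_le_iSup_rpow_neg_mul_exp_mul_rpow hbdd hn⟩

end Localization

/-- localization of `∫_0^T L_n dt = o(ln n)`. If
`∫_0^T L_n(t,ω) dt ≤ η_n(ω) ln n` for all `n ≥ 2` a.s. with `η_n → 0` a.s., and `ρ_N` is
the hitting time of level `ε` by `sup_{n ≥ N} (ln n)⁻¹ ∫_0^t L_n ds` (with
`inf ∅ := T`), then (a) almost surely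
`ψ_N := sup_{n ≥ 1} n^{-ε} exp(∫_0^{ρ_N} L_n ds)` is finite and
`exp(∫_0^{ρ_N} L_n ds) ≤ ψ_N n^ε` for all `n ≥ 1`, and (b) `P(ρ_N < T) → 0` as
`N → ∞`. -/
theorem localization_L_little_o
    {Ω : Type*} [MeasureSpace Ω] [IsProbabilityMeasure (ℙ : Measure Ω)]
    (T : ℝ) (hT : 0 < T)
    (L : ℕ → ℝ → Ω → ℝ)
    (hL0 : ∀ n t ω, 0 ≤ L n t ω)
    (hLm : ∀ n, Measurable fun p : ℝ × Ω => L n p.1 p.2)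
    (hLint : ∀ n, ∀ᵐ ω ∂(ℙ : Measure Ω), IntegrableOn (fun t => L n t ω) (Set.Icc 0 T))
    -- the o(ln n) bound with a.s. vanishing nonnegative random variables η_n
    (η : ℕ → Ω → ℝ) (hη0 : ∀ n ω, 0 ≤ η n ω)
    (hηtend : ∀ᵐ ω ∂(ℙ : Measure Ω), Tendsto (fun n => η n ω) atTop (nhds 0))
    (hbound : ∀ᵐ ω ∂(ℙ : Measure Ω), ∀ n : ℕ, 2 ≤ n →
      (∫ t in Set.Ioc (0:ℝ) T, L n t ω) ≤ η n ω * Real.log n)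
    (ε : ℝ) (hε : 0 < ε)
    -- the stopping times ρ_N (with inf ∅ := T)
    (ρ : ℕ → Ω → ℝ)
    (hρ : ∀ N ω, ρ N ω = sInf ({t ∈ Set.Icc (0:ℝ) T |
      ε ≤ ⨆ n : ℕ, ⨆ _ : N ≤ n,
        (Real.log n)⁻¹ * ∫ s in Set.Ioc (0:ℝ) t, L n s ω} ∪ {T})) :
    (∀ N : ℕ, 2 ≤ N → ∀ᵐ ω ∂(ℙ : Measure Ω),
      BddAbove (Set.range fun n : ℕ => ⨆ _ : 1 ≤ n,
        (n : ℝ) ^ (-ε) * Real.exp (∫ s in Set.Ioc (0:ℝ) (ρ N ω), L n s ω)) ∧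
      ∀ n : ℕ, 1 ≤ n →
        Real.exp (∫ s in Set.Ioc (0:ℝ) (ρ N ω), L n s ω) ≤
          (⨆ n' : ℕ, ⨆ _ : 1 ≤ n',
            (n' : ℝ) ^ (-ε) * Real.exp (∫ s in Set.Ioc (0:ℝ) (ρ N ω), L n' s ω)) *
            (n : ℝ) ^ ε) ∧
    Tendsto (fun N : ℕ => (ℙ : Measure Ω) {ω | ρ N ω < T}) atTop (nhds 0) := by
  let A (n : ℕ) (t : ℝ) (ω : Ω) : ℝ := ∫ s in Ioc 0 t, L n s ω
  have hmono : ∀ᵐ ω, ∀ n, MonotoneOn (fun t => A n t ω) (Icc 0 T) := by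
    filter_upwards [ae_all_iff.2 hLint] with ω hω n
    exact monotoneOn_setIntegral_Ioc (ae_of_all _ (hL0 n · ω)) ((hω n).mono_set Ioc_subset_Icc_self)
  have hmeas (n : ℕ) : Measurable (A n T) :=
    (hLm n).stronglyMeasurable.integral_prod_left'.measurable
  have hlog : ∀ᵐ ω, (fun n => A n T ω) =o[atTop] fun n : ℕ => Real.log n := by
    filter_upwards [hηtend, hbound] with ω hηω hω
    refine isLittleO_of_abs_le_mul hηω ((eventually_ge_atTop 2).mono fun n hn => ?_)
    rw [abs_of_nonneg (integral_nonneg fun t => hL0 n t ω)]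
    exact hω n hn
  have hρ_eq (N : ℕ) (ω : Ω) : ρ N ω = hittingBtwn (tailLogRate A N) (Ici ε) 0 T ω := by
    rw [hittingBtwn_eq_sInf_union_singleton]
    exact hρ N ω
  obtain ⟨hexp, hρ_lt⟩ :=
    localization_L_little_o_general hmono (fun n => (hmeas n).aemeasurable) hlog hε
  simp only [hρ_eq]
  exact ⟨fun N _ => hexp.mono fun ω hω => hω _ (hittingBtwn_mem_Icc hT.le ω), hρ_lt⟩
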